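/- arXiv:2201.04315 — 2 statements merged into one kernel-verified Lean document; each statement's English description precedes it below -/
import Mathlib

section
/- Let 𝒫 be any class of probability distributions on a measurable space 𝒳. Then for every even integer n ≥ 2 and every integer m ≥ 0, the minimax sample-amplification error satisfies ε*(𝒫,n,m) ≤ sqrt( (m²/n) · r_{χ²}(𝒫, n/2) ). -/
open MeasureTheory ProbabilityTheory
open scoped ENNReal NNReal Classical

/-- Total variation distance between two measures: `sup_A |P(A) - Q(A)|`. -/
noncomputable def tvDist {X : Type*} [MeasurableSpace X] (μ ν : Measure X) : ℝ :=
  ⨆ A : {s : Set X // MeasurableSet s}, |(μ A).toReal - (ν A).toReal|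

/-- Minimax sample amplification error `ε*(𝒫, n, m)` for the family `(P θ)_θ`. -/
noncomputable def ampErr {X Θ : Type*} [MeasurableSpace X] (P : Θ → Measure X)
    (n m : ℕ) : ℝ :=
  ⨅ T : {T : Kernel (Fin n → X) (Fin (n + m) → X) // IsMarkovKernel T},
    ⨆ θ : Θ, tvDist (Measure.pi fun _ : Fin (n + m) => P θ)
      ((Measure.pi fun _ : Fin n => P θ).bind T.1)

/-- The chi-squared divergence `χ²(P‖Q) = ∫ (dP/dQ - 1)² dQ` if `P ≪ Q`, `∞` otherwise. -/
noncomputable def chiSqDiv {X : Type*} [MeasurableSpace X] (P Q : Measure X) : ℝ≥0∞ :=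
  if P ≪ Q then ∫⁻ x, ENNReal.ofReal (((P.rnDeriv Q x).toReal - 1) ^ 2) ∂Q else ⊤

/-- The `χ²`-estimation error `r_{χ²}(𝒫, n)`: the minimax risk of estimating the
distribution under expected chi-squared divergence from `n` i.i.d. samples, where the
infimum is over measurable (randomized) estimators, i.e. Markov kernels from samples
to distributions. -/
noncomputable def chiSqRisk {X Θ : Type*} [MeasurableSpace X] (P : Θ → Measure X)
    (n : ℕ) : ℝ≥0∞ :=
  ⨅ est : {κ : Kernel (Fin n → X) X // IsMarkovKernel κ},
    ⨆ θ : Θ, ∫⁻ x, chiSqDiv ((est.1) x) (P θ) ∂(Measure.pi fun _ : Fin n => P θ)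

/-- Jensen's inequality for the square: `(∫ g)² ≤ ∫ g²`. -/
theorem sq_integral_le_integral_sq {Ω : Type*} [MeasurableSpace Ω] {μ : Measure Ω}
    [IsProbabilityMeasure μ] {g : Ω → ℝ} (hg : MemLp g 2 μ) :
    (∫ x, g x ∂μ) ^ 2 ≤ ∫ x, g x ^ 2 ∂μ := by
  have h := variance_nonneg g μ
  rw [variance_eq_sub hg] at h
  simpa using h

/-- Integrating a sample from `Q` inserted at position `i` amounts to reweighting
the `i`-th coordinate of a product sample by `dQ/dP`. -/
theorem integral_insertNth_eq {X : Type*} [MeasurableSpace X] (P Q : Measure X)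
    [IsProbabilityMeasure P] [IsProbabilityMeasure Q] (hQP : Q ≪ P) {N : ℕ}
    {f : (Fin (N + 1) → X) → ℝ} (hf : Measurable f) (hf0 : ∀ x, 0 ≤ f x) (hf1 : ∀ x, f x ≤ 1)
    (i : Fin (N + 1)) :
    ∫ w, ∫ y, f (i.insertNth y w) ∂Q ∂(Measure.pi fun _ : Fin N => P) =
      ∫ x, (Q.rnDeriv P (x i)).toReal * f x ∂(Measure.pi fun _ : Fin (N + 1) => P) := by
  have hmp := (measurePreserving_piFinSuccAbove (fun _ : Fin (N + 1) => P) i).symm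
  have hL : Integrable (fun y => (Q.rnDeriv P y).toReal) P := Measure.integrable_toReal_rnDeriv
  have hLi : Integrable (fun x : Fin (N + 1) → X => (Q.rnDeriv P (x i)).toReal)
      (Measure.pi fun _ => P) :=
    (measurePreserving_eval (fun _ : Fin (N + 1) => P) i).integrable_comp_of_integrable hL
  have hint : Integrable (fun x : Fin (N + 1) → X => (Q.rnDeriv P (x i)).toReal * f x)
      (Measure.pi fun _ => P) := by
    refine hLi.mul_bdd (c := 1) hf.aestronglyMeasurable (.of_forall fun x => ?_)
    rw [Real.norm_eq_abs, abs_of_nonneg (hf0 x)]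
    exact hf1 x
  rw [← hmp.integral_comp', integral_prod_symm]
  · refine integral_congr_ae (.of_forall fun w => ?_)
    simp only
    rw [← integral_rnDeriv_smul hQP]
    simp [MeasurableEquiv.piFinSuccAbove, Fin.insertNthEquiv]
  · exact hmp.integrable_comp_of_integrable hint

/-- Replacing a uniformly random coordinate of a `P`-sample of size `N + 1` by a sample from `Q`
changes the expectation of a `[0, 1]`-valued function by at most `√(χ²(Q‖P) / (4 (N + 1)))`. -/
theorem ofReal_sq_insertion_gap_le {X : Type*} [MeasurableSpace X] (P Q : Measure X)
    [IsProbabilityMeasure P] [IsProbabilityMeasure Q] {N : ℕ}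
    {f : (Fin (N + 1) → X) → ℝ} (hf : Measurable f) (hf0 : ∀ x, 0 ≤ f x) (hf1 : ∀ x, f x ≤ 1) :
    ENNReal.ofReal (((N + 1 : ℝ)⁻¹ * ∑ i : Fin (N + 1),
        ∫ w, ∫ y, f (i.insertNth y w) ∂Q ∂(Measure.pi fun _ : Fin N => P) -
        ∫ x, f x ∂(Measure.pi fun _ : Fin (N + 1) => P)) ^ 2) ≤
      ENNReal.ofReal (4 * (N + 1 : ℝ))⁻¹ * chiSqDiv Q P := by
  have hc : ENNReal.ofReal (4 * (N + 1 : ℝ))⁻¹ ≠ 0 := by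
    rw [ne_eq, ENNReal.ofReal_eq_zero, not_le]; positivity
  by_cases hQP : Q ≪ P
  swap
  · rw [chiSqDiv, if_neg hQP, ENNReal.mul_top hc]
    exact le_top
  rw [chiSqDiv, if_pos hQP]
  set D := ∫⁻ x, ENNReal.ofReal (((Q.rnDeriv P x).toReal - 1) ^ 2) ∂P
  by_cases hDtop : D = ⊤
  · rw [hDtop, ENNReal.mul_top hc]
    exact le_top
  have hLmeas : Measurable fun y => (Q.rnDeriv P y).toReal :=
    (Measure.measurable_rnDeriv Q P).ennreal_toReal
  have hsq : Integrable (fun y => ((Q.rnDeriv P y).toReal - 1) ^ 2) P := by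
    refine ⟨((hLmeas.sub_const 1).pow_const 2).aestronglyMeasurable, ?_⟩
    rw [hasFiniteIntegral_iff_ofReal (.of_forall fun _ => sq_nonneg _)]
    exact lt_top_iff_ne_top.2 hDtop
  have hL1 : MemLp (fun y => (Q.rnDeriv P y).toReal - 1) 2 P :=
    (memLp_two_iff_integrable_sq (hLmeas.sub_const 1).aestronglyMeasurable).2 hsq
  have hDeq : D = ENNReal.ofReal (∫ y, ((Q.rnDeriv P y).toReal - 1) ^ 2 ∂P) :=
    (ofReal_integral_eq_lintegral_ofReal hsq (.of_forall fun _ => sq_nonneg _)).symm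
  have hmean : ∫ y, ((Q.rnDeriv P y).toReal - 1) ∂P = 0 := by
    rw [integral_sub Measure.integrable_toReal_rnDeriv (integrable_const _),
      Measure.integral_toReal_rnDeriv hQP]
    simp
  set π := Measure.pi fun _ : Fin (N + 1) => P with hπ
  set S : (Fin (N + 1) → X) → ℝ := ∑ i, fun x => ((Q.rnDeriv P (x i)).toReal - 1) with hS
  have hcoord : ∀ i : Fin (N + 1), MemLp (fun x : Fin (N + 1) → X =>
      (Q.rnDeriv P (x i)).toReal - 1) 2 π := fun i =>
    hL1.comp_measurePreserving (measurePreserving_eval (fun _ : Fin (N + 1) => P) i)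
  have hSmem : MemLp S 2 π := memLp_finsetSum' _ fun i _ => hcoord i
  have hSmean : ∫ x, S x ∂π = 0 := by
    simp only [hS, Finset.sum_apply]
    rw [integral_finsetSum _ fun i _ => (hcoord i).integrable (by norm_num)]
    refine Finset.sum_eq_zero fun i _ => ?_
    rw [hπ, integral_comp_eval (μ := fun _ : Fin (N + 1) => P) (i := i)
      (f := fun y => (Q.rnDeriv P y).toReal - 1) (hLmeas.sub_const 1).aestronglyMeasurable, hmean]
  have hSvar : ∫ x, S x ^ 2 ∂π = (N + 1) * ∫ y, ((Q.rnDeriv P y).toReal - 1) ^ 2 ∂P := by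
    have h := variance_sum_pi (μ := fun _ : Fin (N + 1) => P)
      (X := fun _ y => (Q.rnDeriv P y).toReal - 1) fun _ => hL1
    rw [← hS, ← hπ, variance_of_integral_eq_zero hSmem.aemeasurable hSmean] at h
    rw [h, variance_of_integral_eq_zero hL1.aemeasurable hmean]
    simp
  have hfmem : MemLp f ⊤ π := memLp_top_of_bound hf.aestronglyMeasurable 1
    (.of_forall fun x => by rw [Real.norm_eq_abs, abs_of_nonneg (hf0 x)]; exact hf1 x)
  have hfint : Integrable f π := hfmem.integrable le_top
  have hgap : (N + 1 : ℝ)⁻¹ * ∑ i : Fin (N + 1),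
        ∫ w, ∫ y, f (i.insertNth y w) ∂Q ∂(Measure.pi fun _ : Fin N => P) - ∫ x, f x ∂π
      = ∫ x, (N + 1 : ℝ)⁻¹ * ((f x - 1 / 2) * S x) ∂π := by
    have hfS : ∀ i : Fin (N + 1), Integrable (fun x =>
        ((Q.rnDeriv P (x i)).toReal - 1) * f x) π := fun i =>
      ((hcoord i).integrable (by norm_num)).mul_of_top_left hfmem
    have h1 : ∀ i : Fin (N + 1),
        ∫ w, ∫ y, f (i.insertNth y w) ∂Q ∂(Measure.pi fun _ : Fin N => P) =
          ∫ x, ((Q.rnDeriv P (x i)).toReal - 1) * f x ∂π + ∫ x, f x ∂π := fun i => by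
      rw [integral_insertNth_eq P Q hQP hf hf0 hf1, ← integral_add (hfS i) hfint]
      exact integral_congr_ae (.of_forall fun x => by simp only; ring)
    have h2 : ∫ x, (f x - 1 / 2) * S x ∂π =
        ∑ i : Fin (N + 1), ∫ x, ((Q.rnDeriv P (x i)).toReal - 1) * f x ∂π := by
      rw [← integral_finsetSum _ fun i _ => hfS i]
      have h3 : Integrable (fun x => ∑ i : Fin (N + 1),
        ((Q.rnDeriv P (x i)).toReal - 1) * f x) π := integrable_finsetSum _ fun i _ => hfS i
      have h4 : Integrable (fun x => 1 / 2 * S x) π :=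
        (hSmem.integrable (by norm_num)).const_mul _
      have h5 : ∫ x, 1 / 2 * S x ∂π = 0 := by rw [integral_const_mul, hSmean, mul_zero]
      rw [← sub_zero (∫ x, ∑ i : Fin (N + 1), _ ∂π), ← h5, ← integral_sub h3 h4]
      refine integral_congr_ae (.of_forall fun x => ?_)
      simp only [hS, Finset.sum_apply, ← Finset.sum_mul]
      ring
    rw [integral_const_mul, h2, Finset.sum_congr rfl fun i _ => h1 i, Finset.sum_add_distrib]
    simp only [Finset.sum_const, Finset.card_univ, Fintype.card_fin, nsmul_eq_mul]
    push_cast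
    field_simp
    ring
  have hSsq : Integrable (fun x => S x ^ 2) π := hSmem.integrable_sq
  have hhalf : ∀ x, (f x - 1 / 2) ^ 2 ≤ 1 / 4 := fun x => by nlinarith [hf0 x, hf1 x]
  have hmem : MemLp (fun x => (N + 1 : ℝ)⁻¹ * ((f x - 1 / 2) * S x)) 2 π := by
    refine MemLp.const_mul ?_ _
    exact hSmem.mul (hfmem.sub (memLp_const _))
  rw [hgap, hDeq, ← ENNReal.ofReal_mul (by positivity)]
  refine ENNReal.ofReal_le_ofReal ((sq_integral_le_integral_sq hmem).trans ?_)
  calc ∫ x, ((N + 1 : ℝ)⁻¹ * ((f x - 1 / 2) * S x)) ^ 2 ∂π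
      ≤ ∫ x, ((N + 1 : ℝ)⁻¹ ^ 2 * (1 / 4)) * S x ^ 2 ∂π := by
        refine integral_mono hmem.integrable_sq (hSsq.const_mul _) fun x => ?_
        simp only [mul_pow]
        rw [← mul_assoc]
        gcongr
        exact hhalf x
    _ = _ := by
        rw [integral_const_mul, hSvar]
        field_simp

theorem integrable_of_mem_unitInterval {Ω : Type*} [MeasurableSpace Ω] {μ : Measure Ω}
    [IsFiniteMeasure μ] {g : Ω → ℝ} (hg : Measurable g) (hg0 : ∀ x, 0 ≤ g x) (hg1 : ∀ x, g x ≤ 1) :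
    Integrable g μ :=
  .of_bound hg.aestronglyMeasurable 1 (.of_forall fun x => by
    rw [Real.norm_eq_abs, abs_of_nonneg (hg0 x)]; exact hg1 x)

theorem integral_le_one_of_le_one {Ω : Type*} [MeasurableSpace Ω] {μ : Measure Ω}
    [IsProbabilityMeasure μ] {g : Ω → ℝ} (hg : Measurable g) (hg0 : ∀ x, 0 ≤ g x)
    (hg1 : ∀ x, g x ≤ 1) : ∫ x, g x ∂μ ≤ 1 := by
  simpa using integral_mono (integrable_of_mem_unitInterval (μ := μ) hg hg0 hg1)
    (integrable_const (1 : ℝ)) hg1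

theorem measurable_insertNth {X : Type*} [MeasurableSpace X] {N : ℕ} (i : Fin (N + 1)) :
    Measurable fun p : X × (Fin N → X) => (i.insertNth p.1 p.2 : Fin (N + 1) → X) :=
  (MeasurableEquiv.piFinSuccAbove (fun _ : Fin (N + 1) => X) i).symm.measurable

/-- The Markov kernel which draws `y` from `κ z` and inserts it into the tuple `w` at a
uniformly random position, keeping `z`. -/
theorem exists_insertion_kernel {Z X : Type*} [MeasurableSpace Z] [MeasurableSpace X]
    (κ : Kernel Z X) [IsMarkovKernel κ] (N : ℕ) :
    ∃ S : Kernel (Z × (Fin N → X)) (Z × (Fin (N + 1) → X)), IsMarkovKernel S ∧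
      ∀ f : Z × (Fin (N + 1) → X) → ℝ, Measurable f → (∀ q, 0 ≤ f q) → (∀ q, f q ≤ 1) →
        ∀ p, ∫ q, f q ∂S p =
          (N + 1 : ℝ)⁻¹ * ∑ i : Fin (N + 1), ∫ y, f (p.1, i.insertNth y p.2) ∂κ p.1 := by
  set U : Measure (Fin (N + 1)) := (PMF.uniformOfFintype (Fin (N + 1))).toMeasure
  set g : (Z × (Fin N → X)) × (Fin (N + 1) × X) → Z × (Fin (N + 1) → X) :=
    fun q => (q.1.1, q.2.1.insertNth q.2.2 q.1.2) with hg_def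
  have hg : Measurable g := by
    have h : Measurable fun r : Fin (N + 1) × ((Z × (Fin N → X)) × X) =>
        ((r.2.1.1, r.1.insertNth r.2.2 r.2.1.2) : Z × (Fin (N + 1) → X)) :=
      measurable_from_prod_countable_right fun i =>
        (measurable_fst.comp measurable_fst).prodMk
          ((measurable_insertNth i).comp (measurable_snd.prodMk
            (measurable_snd.comp measurable_fst)))
    exact h.comp ((measurable_fst.comp measurable_snd).prodMk
      (measurable_fst.prodMk (measurable_snd.comp measurable_snd)))
  refine ⟨(Kernel.id ×ₖ (Kernel.const _ U ×ₖ κ.comap Prod.fst measurable_fst)).map g,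
    Kernel.IsMarkovKernel.map _ hg, fun f hf hf0 hf1 p => ?_⟩
  have hfg : Measurable fun q => f (g q) := hf.comp hg
  have hfgp : Measurable fun r => f (g (p, r)) := hfg.comp measurable_prodMk_left
  rw [Kernel.map_apply _ hg, integral_map hg.aemeasurable hf.aestronglyMeasurable,
    Kernel.prod_apply, Kernel.id_apply, Kernel.prod_apply, Kernel.const_apply,
    Kernel.comap_apply, integral_prod _ (integrable_of_mem_unitInterval hfg
      (fun _ => hf0 _) fun _ => hf1 _),
    integral_dirac' _ _ hfg.stronglyMeasurable.integral_prod_right',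
    integral_prod _ (integrable_of_mem_unitInterval hfgp
      (fun _ => hf0 _) fun _ => hf1 _), PMF.integral_eq_sum]
  rw [Finset.mul_sum]
  refine Finset.sum_congr rfl fun i _ => ?_
  have hc : (N + 1 : ℝ≥0∞).toReal = N + 1 := by exact_mod_cast ENNReal.toReal_natCast (N + 1)
  simp [hg_def, hc]

/-- The bound of `ofReal_sq_insertion_gap_le` averaged over the random seed `z` of `κ z`. -/
theorem ofReal_sq_kernel_gap_le {Z X : Type*} [MeasurableSpace Z] [MeasurableSpace X]
    (κ : Kernel Z X) [IsMarkovKernel κ] {N : ℕ}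
    {S : Kernel (Z × (Fin N → X)) (Z × (Fin (N + 1) → X))} [IsMarkovKernel S]
    (hS : ∀ f : Z × (Fin (N + 1) → X) → ℝ, Measurable f → (∀ q, 0 ≤ f q) → (∀ q, f q ≤ 1) →
        ∀ p, ∫ q, f q ∂S p =
          (N + 1 : ℝ)⁻¹ * ∑ i : Fin (N + 1), ∫ y, f (p.1, i.insertNth y p.2) ∂κ p.1)
    (P : Measure X) [IsProbabilityMeasure P] (μ : Measure Z) [IsProbabilityMeasure μ]
    {f : Z × (Fin (N + 1) → X) → ℝ} (hf : Measurable f) (hf0 : ∀ q, 0 ≤ f q)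
    (hf1 : ∀ q, f q ≤ 1) :
    ENNReal.ofReal ((∫ p, ∫ q, f q ∂S p ∂(μ.prod (Measure.pi fun _ => P)) -
        ∫ q, f q ∂(μ.prod (Measure.pi fun _ => P))) ^ 2) ≤
      ENNReal.ofReal (4 * (N + 1 : ℝ))⁻¹ * ∫⁻ z, chiSqDiv (κ z) P ∂μ := by
  have hSf : Measurable fun p => ∫ q, f q ∂S p :=
    hf.stronglyMeasurable.integral_kernel.measurable
  have hSf0 : ∀ p, 0 ≤ ∫ q, f q ∂S p := fun p => integral_nonneg hf0
  have hSf1 : ∀ p, ∫ q, f q ∂S p ≤ 1 := fun p => integral_le_one_of_le_one hf hf0 hf1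
  set b : Z → ℝ := fun z => ∫ w, ∫ q, f q ∂S (z, w) ∂(Measure.pi fun _ : Fin N => P) with hb
  set c : Z → ℝ := fun z => ∫ x, f (z, x) ∂(Measure.pi fun _ : Fin (N + 1) => P) with hc
  have hbm : Measurable b := hSf.stronglyMeasurable.integral_prod_right'.measurable
  have hcm : Measurable c := hf.stronglyMeasurable.integral_prod_right'.measurable
  have hb0 : ∀ z, 0 ≤ b z := fun z => integral_nonneg fun w => hSf0 _
  have hb1 : ∀ z, b z ≤ 1 := fun z =>
    integral_le_one_of_le_one (hSf.comp measurable_prodMk_left) (fun w => hSf0 _) fun w => hSf1 _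
  have hc0 : ∀ z, 0 ≤ c z := fun z => integral_nonneg fun w => hf0 _
  have hc1 : ∀ z, c z ≤ 1 := fun z =>
    integral_le_one_of_le_one (hf.comp measurable_prodMk_left) (fun w => hf0 _) fun w => hf1 _
  have hmem : MemLp (fun z => b z - c z) 2 μ :=
    .of_bound (hbm.sub hcm).aestronglyMeasurable 1 (.of_forall fun z => by
      rw [Real.norm_eq_abs, abs_le]
      constructor <;> linarith [hb0 z, hb1 z, hc0 z, hc1 z])
  rw [integral_prod _ (integrable_of_mem_unitInterval hSf hSf0 hSf1),
    integral_prod _ (integrable_of_mem_unitInterval hf hf0 hf1),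
    ← integral_sub (integrable_of_mem_unitInterval hbm hb0 hb1)
      (integrable_of_mem_unitInterval hcm hc0 hc1)]
  refine (ENNReal.ofReal_le_ofReal (sq_integral_le_integral_sq hmem)).trans ?_
  rw [ofReal_integral_eq_lintegral_ofReal hmem.integrable_sq (.of_forall fun _ => sq_nonneg _),
    ← lintegral_const_mul' _ _ ENNReal.ofReal_ne_top]
  refine lintegral_mono fun z => ?_
  have hbz : b z = (N + 1 : ℝ)⁻¹ * ∑ i : Fin (N + 1),
      ∫ w, ∫ y, f (z, i.insertNth y w) ∂κ z ∂(Measure.pi fun _ : Fin N => P) := by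
    simp only [hb, hS f hf hf0 hf1]
    rw [integral_const_mul, integral_finsetSum]
    intro i _
    have h : Measurable fun q : (Fin N → X) × X => f (z, i.insertNth q.2 q.1) :=
      hf.comp (measurable_const.prodMk ((measurable_insertNth i).comp measurable_swap))
    exact integrable_of_mem_unitInterval h.stronglyMeasurable.integral_prod_right'.measurable
      (fun w => integral_nonneg fun y => hf0 _)
      fun w => integral_le_one_of_le_one (h.comp measurable_prodMk_left)
        (fun y => hf0 _) fun y => hf1 _
  rw [hbz]
  exact ofReal_sq_insertion_gap_le P (κ z) (f := fun x => f (z, x))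
    (hf.comp measurable_prodMk_left) (fun x => hf0 _) fun x => hf1 _

/-- Inserting `m` samples from `κ z` one after another, each at a uniformly random position,
turns `N` samples into approximately `N + m` samples. -/
theorem exists_amplification_kernel {Z X : Type*} [MeasurableSpace Z] [MeasurableSpace X]
    (κ : Kernel Z X) [IsMarkovKernel κ] (N m : ℕ) :
    ∃ K : Kernel (Z × (Fin N → X)) (Z × (Fin (N + m) → X)), IsMarkovKernel K ∧
      ∀ (P : Measure X) [IsProbabilityMeasure P] (μ : Measure Z) [IsProbabilityMeasure μ]
        (f : Z × (Fin (N + m) → X) → ℝ), Measurable f → (∀ q, 0 ≤ f q) → (∀ q, f q ≤ 1) →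
        ENNReal.ofReal |∫ p, ∫ q, f q ∂K p ∂(μ.prod (Measure.pi fun _ => P)) -
            ∫ q, f q ∂(μ.prod (Measure.pi fun _ => P))| ≤
          m * (ENNReal.ofReal (4 * (N + 1 : ℝ))⁻¹ * ∫⁻ z, chiSqDiv (κ z) P ∂μ) ^ (1 / 2 : ℝ) := by
  induction m with
  | zero =>
    refine ⟨Kernel.id, inferInstance, fun P _ μ _ (f : Z × (Fin N → X) → ℝ) hf _ _ => ?_⟩
    change ENNReal.ofReal |∫ p, ∫ q, f q ∂(Kernel.id p) ∂(μ.prod (Measure.pi fun _ => P)) -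
      ∫ q, f q ∂(μ.prod (Measure.pi fun _ => P))| ≤ _
    have hid : ∀ p, ∫ q, f q ∂(Kernel.id p) = f p := fun p => by
      rw [Kernel.id_apply]
      exact integral_dirac' f p hf.stronglyMeasurable
    rw [integral_congr_ae (.of_forall hid)]
    simp
  | succ m ih =>
    obtain ⟨K, hK, hKb⟩ := ih
    obtain ⟨S, hS, hSf⟩ := exists_insertion_kernel κ (N + m)
    refine ⟨S ∘ₖ K, inferInstance, fun P _ μ _ (f : Z × (Fin (N + m + 1) → X) → ℝ)
      hf hf0 hf1 => ?_⟩
    change ENNReal.ofReal |∫ p, ∫ q, f q ∂((S ∘ₖ K) p) ∂(μ.prod (Measure.pi fun _ => P)) -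
      ∫ q, f q ∂(μ.prod (Measure.pi fun _ => P))| ≤ _
    have hm : Measurable fun p => ∫ q, f q ∂S p :=
      hf.stronglyMeasurable.integral_kernel.measurable
    have h1 := hKb P μ (fun p => ∫ q, f q ∂S p) hm (fun p => integral_nonneg hf0)
      fun p => integral_le_one_of_le_one hf hf0 hf1
    have h2 := ofReal_sq_kernel_gap_le κ hSf P μ hf hf0 hf1
    have hcomp : ∀ p, ∫ q, f q ∂(S ∘ₖ K) p = ∫ r, ∫ q, f q ∂S r ∂K p := fun p =>
      Kernel.integral_comp (integrable_of_mem_unitInterval hf hf0 hf1)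
    rw [integral_congr_ae (.of_forall hcomp)]
    set a := ∫ p, ∫ r, ∫ q, f q ∂S r ∂K p ∂(μ.prod (Measure.pi fun _ => P))
    set b := ∫ r, ∫ q, f q ∂S r ∂(μ.prod (Measure.pi fun _ : Fin (N + m) => P))
    have h3 : ENNReal.ofReal |b - ∫ q, f q ∂(μ.prod (Measure.pi fun _ => P))| ≤
        (ENNReal.ofReal (4 * (N + 1 : ℝ))⁻¹ * ∫⁻ z, chiSqDiv (κ z) P ∂μ) ^ (1 / 2 : ℝ) := by
      rw [one_div, ENNReal.le_rpow_inv_iff (by norm_num), ENNReal.rpow_ofNat,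
        ← ENNReal.ofReal_pow (abs_nonneg _), sq_abs]
      refine h2.trans ?_
      gcongr
      linarith [(Nat.cast_nonneg m : (0 : ℝ) ≤ m)]
    calc _ ≤ ENNReal.ofReal (|a - b| + |b - ∫ q, f q ∂(μ.prod (Measure.pi fun _ => P))|) :=
          ENNReal.ofReal_le_ofReal (abs_sub_le _ _ _)
      _ ≤ _ := by
        rw [ENNReal.ofReal_add (abs_nonneg _) (abs_nonneg _)]
        push_cast
        rw [add_mul, one_mul]
        exact add_le_add h1 h3

theorem exists_measurePreserving_split (X : Type*) [MeasurableSpace X] {a b c : ℕ}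
    (h : a + b = c) :
    ∃ E : (Fin c → X) ≃ᵐ (Fin a → X) × (Fin b → X), ∀ (P : Measure X) [IsProbabilityMeasure P],
      MeasurePreserving E (Measure.pi fun _ => P)
        ((Measure.pi fun _ => P).prod (Measure.pi fun _ => P)) := by
  subst h
  exact ⟨(MeasurableEquiv.piCongrLeft (fun _ => X) finSumFinEquiv).symm.trans
      (MeasurableEquiv.sumPiEquivProdPi fun _ => X), fun P _ =>
    (measurePreserving_piCongrLeft (fun _ => P) finSumFinEquiv).symm.trans
      (measurePreserving_sumPiEquivProdPi fun _ => P)⟩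

theorem tvDist_nonneg {X : Type*} [MeasurableSpace X] (μ ν : Measure X) : 0 ≤ tvDist μ ν :=
  Real.iSup_nonneg fun _ => abs_nonneg _

/-- If a single randomized map has total variation error at most `B` for every distribution in
the class, then so does the minimax error. -/
theorem ofReal_ampErr_le {X Θ : Type*} [MeasurableSpace X] {P : Θ → Measure X} {n m : ℕ}
    (T : Kernel (Fin n → X) (Fin (n + m) → X)) [IsMarkovKernel T] {B : ℝ≥0∞}
    (hT : ∀ θ, ∀ A : Set (Fin (n + m) → X), MeasurableSet A →
      ENNReal.ofReal |((Measure.pi fun _ : Fin (n + m) => P θ) A).toReal -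
        (((Measure.pi fun _ : Fin n => P θ).bind T) A).toReal| ≤ B) :
    ENNReal.ofReal (ampErr P n m) ≤ B := by
  by_cases hB : B = ⊤
  · simp [hB]
  refine ENNReal.ofReal_le_of_le_toReal ?_
  have hbdd : BddBelow (Set.range fun T : {T : Kernel (Fin n → X) (Fin (n + m) → X) //
      IsMarkovKernel T} => ⨆ θ : Θ, tvDist (Measure.pi fun _ : Fin (n + m) => P θ)
      ((Measure.pi fun _ : Fin n => P θ).bind T.1)) :=
    ⟨0, by rintro _ ⟨T, rfl⟩; exact Real.iSup_nonneg fun _ => tvDist_nonneg _ _⟩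
  refine (ciInf_le hbdd ⟨T, inferInstance⟩).trans ?_
  refine Real.iSup_le (fun θ => Real.iSup_le (fun A => ?_) ENNReal.toReal_nonneg)
    ENNReal.toReal_nonneg
  exact (ENNReal.ofReal_le_iff_le_toReal hB).1 (hT θ A.1 A.2)

/-- The first `k` samples feed the estimator `κ`, whose output is inserted into the other `k`. -/
theorem ofReal_ampErr_le_of_estimator {X Θ : Type*} [MeasurableSpace X] (P : Θ → Measure X)
    (hP : ∀ θ, IsProbabilityMeasure (P θ)) (k m : ℕ) (κ : Kernel (Fin k → X) X)
    [IsMarkovKernel κ] :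
    ENNReal.ofReal (ampErr P (k + k) m) ≤
      m * (ENNReal.ofReal (4 * (k + 1 : ℝ))⁻¹ *
        ⨆ θ : Θ, ∫⁻ x, chiSqDiv (κ x) (P θ) ∂(Measure.pi fun _ : Fin k => P θ)) ^ (1 / 2 : ℝ) := by
  obtain ⟨K, hK, hKb⟩ := exists_amplification_kernel κ k m
  obtain ⟨E₁, hE₁⟩ := exists_measurePreserving_split X (rfl : k + k = k + k)
  obtain ⟨E₂, hE₂⟩ := exists_measurePreserving_split X (Nat.add_assoc k k m).symm
  have hT : IsMarkovKernel ((K.comap E₁ E₁.measurable).map E₂.symm) :=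
    Kernel.IsMarkovKernel.map _ E₂.symm.measurable
  refine ofReal_ampErr_le ((K.comap E₁ E₁.measurable).map E₂.symm) fun θ A hA => ?_
  have := hP θ
  have hB : MeasurableSet (E₂.symm ⁻¹' A) := E₂.symm.measurable hA
  have hKB : Measurable fun p => K p (E₂.symm ⁻¹' A) := K.measurable_coe hB
  have htrue : ((Measure.pi fun _ : Fin (k + k + m) => P θ) A).toReal =
      ∫ q, (E₂.symm ⁻¹' A).indicator 1 q
        ∂((Measure.pi fun _ => P θ).prod (Measure.pi fun _ => P θ)) := by
    rw [integral_indicator_one hB, measureReal_def,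
      (hE₂ (P θ)).symm.measure_preimage hA.nullMeasurableSet]
  have hamp : (((Measure.pi fun _ : Fin (k + k) => P θ).bind
      ((K.comap E₁ E₁.measurable).map E₂.symm)) A).toReal =
      ∫ p, ∫ q, (E₂.symm ⁻¹' A).indicator 1 q ∂K p
        ∂((Measure.pi fun _ => P θ).prod (Measure.pi fun _ => P θ)) := by
    simp only [integral_indicator_one hB, measureReal_def]
    rw [Measure.bind_apply hA (Kernel.aemeasurable _),
      integral_toReal hKB.aemeasurable (.of_forall fun p => measure_lt_top _ _),
      ← (hE₁ (P θ)).lintegral_comp hKB]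
    refine congrArg _ (lintegral_congr fun x => ?_)
    rw [Kernel.map_apply' _ E₂.symm.measurable _ hA, Kernel.comap_apply]
  rw [htrue, hamp, abs_sub_comm]
  refine (hKb (P θ) (Measure.pi fun _ => P θ) ((E₂.symm ⁻¹' A).indicator 1)
    (measurable_one.indicator hB) (fun q => Set.indicator_nonneg (fun _ _ => zero_le_one) q)
    fun q => Set.indicator_le_self' (fun _ _ => zero_le_one) q).trans ?_
  gcongr
  exact le_iSup (fun θ => ∫⁻ x, chiSqDiv (κ x) (P θ) ∂(Measure.pi fun _ : Fin k => P θ)) θ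

theorem nonempty_markovKernel {Y X : Type*} [MeasurableSpace Y] [MeasurableSpace X]
    (h : Nonempty Y → Nonempty X) : Nonempty {κ : Kernel Y X // IsMarkovKernel κ} := by
  by_cases hX : Nonempty X
  · exact ⟨⟨Kernel.const _ (Measure.dirac hX.some), inferInstance⟩⟩
  · exact ⟨⟨0, ⟨fun y => (hX (h ⟨y⟩)).elim⟩⟩⟩

/-- Amplification via learning: general classes.
For any class of probability distributions, any even `n ≥ 2` and any `m ≥ 0`,
`ε*(𝒫, n, m) ≤ sqrt((m²/n) · r_{χ²}(𝒫, n/2))`. -/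
theorem ampErr_le_sqrt_chiSqRisk
    {X Θ : Type*} [MeasurableSpace X] (P : Θ → Measure X)
    (hP : ∀ θ, IsProbabilityMeasure (P θ))
    (n m : ℕ) (hn : 2 ≤ n) (hev : Even n) :
    ENNReal.ofReal (ampErr P n m) ≤
      ((m : ℝ≥0∞) ^ 2 / (n : ℝ≥0∞) * chiSqRisk P (n / 2)) ^ ((1 : ℝ) / 2) := by
  obtain ⟨k, rfl⟩ := hev
  have hk : 1 ≤ k := by omega
  rw [show (k + k) / 2 = k by omega, chiSqRisk]
  have : Nonempty {κ : Kernel (Fin k → X) X // IsMarkovKernel κ} :=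
    nonempty_markovKernel fun ⟨x⟩ => ⟨x ⟨0, hk⟩⟩
  have hn0 : ((k + k : ℕ) : ℝ≥0∞) ≠ 0 := by exact_mod_cast (by omega : k + k ≠ 0)
  rw [ENNReal.mul_iInf fun h => (ENNReal.div_ne_top (by simp) hn0 h).elim, one_div,
    ENNReal.le_rpow_inv_iff (by norm_num), le_iInf_iff]
  rintro ⟨κ, hκ⟩
  rw [← ENNReal.le_rpow_inv_iff (by norm_num), ← one_div]
  refine (ofReal_ampErr_le_of_estimator P hP k m κ).trans ?_
  have hc : ENNReal.ofReal (4 * (k + 1 : ℝ))⁻¹ ≤ ((k + k : ℕ) : ℝ≥0∞)⁻¹ := by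
    rw [ENNReal.ofReal_inv_of_pos (by positivity), ENNReal.inv_le_inv,
      ← ENNReal.ofReal_natCast]
    refine ENNReal.ofReal_le_ofReal ?_
    push_cast
    linarith [(Nat.cast_nonneg k : (0 : ℝ) ≤ k)]
  have hsqrt : (m : ℝ≥0∞) = ((m : ℝ≥0∞) ^ 2) ^ (1 / 2 : ℝ) := by
    rw [← ENNReal.rpow_natCast, ← ENNReal.rpow_mul]
    norm_num
  rw [div_eq_mul_inv ((m : ℝ≥0∞) ^ 2), mul_assoc,
    ENNReal.mul_rpow_of_nonneg ((m : ℝ≥0∞) ^ 2) _ (by norm_num), ← hsqrt]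
  gcongr
end

section
/- Let P and Q be probability distributions on a measurable space 𝒳, let X_1,…,X_n be i.i.d. samples from P and Y_1,…,Y_m be i.i.d. samples from Q, independent of (X_1,…,X_n). Let (Z_1,…,Z_{n+m}) be obtained by applying a uniformly random permutation of [n+m] to the concatenated tuple (X_1,…,X_n,Y_1,…,Y_m), and let P_mix denote the law of (Z_1,…,Z_{n+m}) on 𝒳^{n+m}. Then χ²(P_mix ‖ P^{⊗(n+m)}) ≤ (1 + (m/(n+m))·χ²(Q‖P))^m − 1. -/
open MeasureTheory ProbabilityTheory
open scoped ENNReal NNReal Classical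

/-- The law of a uniformly random permutation applied to the concatenation of `n`
i.i.d. samples from `P` (the first `n` coordinates) and `m` i.i.d. samples from `Q`
(the last `m` coordinates), all independent. -/
noncomputable def shuffleMix {X : Type*} [MeasurableSpace X] (P Q : Measure X)
    (n m : ℕ) : Measure (Fin (n + m) → X) :=
  (((n + m).factorial : ℝ≥0∞))⁻¹ •
    ∑ σ : Equiv.Perm (Fin (n + m)),
      Measure.map (fun x => x ∘ σ)
        (Measure.pi fun i : Fin (n + m) => if (i : ℕ) < n then P else Q)

theorem Nat.descFactorial_mul_pow_le {a b : ℕ} (hab : a ≤ b) (t : ℕ) :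
    a.descFactorial t * b ^ t ≤ b.descFactorial t * a ^ t := by
  induction t with
  | zero => simp
  | succ t ih =>
    have h : (a - t) * b ≤ (b - t) * a := by
      rw [Nat.sub_mul, Nat.sub_mul, mul_comm b a]
      exact Nat.sub_le_sub_left (Nat.mul_le_mul_left t hab) _
    calc a.descFactorial (t + 1) * b ^ (t + 1)
        = ((a - t) * b) * (a.descFactorial t * b ^ t) := by
          rw [Nat.descFactorial_succ]; ring
      _ ≤ ((b - t) * a) * (b.descFactorial t * a ^ t) := Nat.mul_le_mul h ih
      _ = b.descFactorial (t + 1) * a ^ (t + 1) := by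
          rw [Nat.descFactorial_succ]; ring

namespace Equiv.Perm

variable {ι : Type*} [Fintype ι] [DecidableEq ι]

/-- The number of permutations mapping `T` into `S` depends on `T` only through its
cardinality. -/
theorem card_filter_map_subset_congr {T T' : Finset ι} (S : Finset ι)
    (h : T.card = T'.card) :
    (Finset.univ.filter fun σ : Equiv.Perm ι => T.map σ.toEmbedding ⊆ S).card =
      (Finset.univ.filter fun σ : Equiv.Perm ι => T'.map σ.toEmbedding ⊆ S).card := by
  obtain ⟨π, rfl⟩ := Equiv.Perm.exists_map_finset_eq T T' h
  refine Finset.card_equiv (Equiv.mulRight π⁻¹) fun σ => ?_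
  simp only [Finset.mem_filter, Finset.mem_univ, true_and, Finset.map_map]
  have h : π.toEmbedding.trans (Equiv.mulRight π⁻¹ σ).toEmbedding = σ.toEmbedding := by
    ext x
    simp
  rw [h]

theorem choose_mul_card_filter_map_subset (S T : Finset ι) :
    (Fintype.card ι).choose T.card *
        (Finset.univ.filter fun σ : Equiv.Perm ι => T.map σ.toEmbedding ⊆ S).card =
      (Fintype.card ι).factorial * S.card.choose T.card := by
  have h := Finset.sum_card_bipartiteAbove_eq_sum_card_bipartiteBelow
    (s := Finset.powersetCard T.card (Finset.univ : Finset ι))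
    (t := (Finset.univ : Finset (Equiv.Perm ι)))
    (fun U σ => U.map σ.toEmbedding ⊆ S)
  simp only [Finset.bipartiteAbove, Finset.bipartiteBelow] at h
  rw [Finset.sum_congr rfl fun U hU =>
    card_filter_map_subset_congr S (Finset.mem_powersetCard.1 hU).2] at h
  have h' : ∀ σ : Equiv.Perm ι,
      ((Finset.powersetCard T.card (Finset.univ : Finset ι)).filter
        fun U => U.map σ.toEmbedding ⊆ S).card = S.card.choose T.card := by
    intro σ
    rw [← Finset.card_powersetCard]
    refine Finset.card_equiv σ.finsetCongr fun U => ?_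
    simp [Finset.mem_powersetCard, and_comm]
  simpa [h', Fintype.card_perm] using h

theorem card_filter_map_subset_le (S T : Finset ι) :
    ((Finset.univ.filter fun σ : Equiv.Perm ι => T.map σ.toEmbedding ⊆ S).card : ℝ≥0∞) ≤
      (Fintype.card ι).factorial * ((S.card : ℝ≥0∞) / Fintype.card ι) ^ T.card := by
  set k := (Finset.univ.filter fun σ : Equiv.Perm ι => T.map σ.toEmbedding ⊆ S).card with hk
  have hT := T.card_le_univ
  have hle : k * Fintype.card ι ^ T.card ≤ (Fintype.card ι).factorial * S.card ^ T.card := by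
    have h := choose_mul_card_filter_map_subset S T
    rw [← hk] at h
    have hpos : 0 < (Fintype.card ι).descFactorial T.card := Nat.descFactorial_pos.2 hT
    refine Nat.le_of_mul_le_mul_left ?_ hpos
    calc (Fintype.card ι).descFactorial T.card * (k * Fintype.card ι ^ T.card)
        = T.card.factorial * ((Fintype.card ι).choose T.card * k) *
            Fintype.card ι ^ T.card := by
          rw [Nat.descFactorial_eq_factorial_mul_choose]; ring
      _ = (Fintype.card ι).factorial *
            (S.card.descFactorial T.card * Fintype.card ι ^ T.card) := by
          rw [h, Nat.descFactorial_eq_factorial_mul_choose]; ring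
      _ ≤ (Fintype.card ι).factorial *
            ((Fintype.card ι).descFactorial T.card * S.card ^ T.card) :=
          Nat.mul_le_mul_left _ (Nat.descFactorial_mul_pow_le S.card_le_univ _)
      _ = _ := by ring
  have h0 : (Fintype.card ι) ^ T.card ≠ 0 := by
    rw [Ne, pow_eq_zero_iff']
    omega
  have h0' : ((Fintype.card ι : ℝ≥0∞)) ^ T.card ≠ 0 := by exact_mod_cast h0
  rw [div_eq_mul_inv, mul_pow, ← ENNReal.inv_pow, ← mul_assoc, ← div_eq_mul_inv,
    ENNReal.le_div_iff_mul_le (Or.inl h0') (Or.inl (by finiteness))]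
  exact_mod_cast hle

/-- A uniformly random permutation sends a hypergeometric number of elements of `A` into `S`;
its probability generating function at `1 + c` is at most the binomial one. -/
theorem sum_prod_ite_le (A S : Finset ι) (c : ℝ≥0∞) :
    ∑ σ : Equiv.Perm ι, ∏ i ∈ A, (1 + if σ i ∈ S then c else 0) ≤
      (Fintype.card ι).factorial * (1 + (S.card : ℝ≥0∞) / Fintype.card ι * c) ^ A.card := by
  have hprod : ∀ (σ : Equiv.Perm ι) (T : Finset ι),
      (∏ i ∈ T, if σ i ∈ S then c else 0) =
        if T.map σ.toEmbedding ⊆ S then c ^ T.card else 0 := by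
    intro σ T
    rw [Finset.prod_ite_zero, Finset.prod_const]
    simp only [Finset.subset_iff, Finset.forall_mem_map, Equiv.coe_toEmbedding]
    congr 1
  simp_rw [Finset.prod_one_add, hprod]
  rw [Finset.sum_comm, ← Finset.prod_const, Finset.prod_one_add, Finset.mul_sum]
  refine Finset.sum_le_sum fun T _ => ?_
  rw [← Finset.sum_filter, Finset.sum_const, nsmul_eq_mul, Finset.prod_const, mul_pow, ← mul_assoc]
  gcongr
  exact card_filter_map_subset_le S T

end Equiv.Perm

namespace MeasureTheory.Measure

variable {X : Type*} [MeasurableSpace X]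

theorem withDensity_finsetSum {κ : Type*} (μ : Measure X) (s : Finset κ)
    {f : κ → X → ℝ≥0∞} (hf : ∀ k, Measurable (f k)) :
    μ.withDensity (fun x => ∑ k ∈ s, f k x) = ∑ k ∈ s, μ.withDensity (f k) := by
  ext t ht
  rw [withDensity_apply _ ht, lintegral_finsetSum _ fun k _ => hf k, finsetSum_apply]
  exact Finset.sum_congr rfl fun k _ => (withDensity_apply _ ht).symm

variable {ι : Type*} [Fintype ι]

theorem lintegral_pi_prod (μ : ι → Measure X) [∀ i, IsProbabilityMeasure (μ i)]
    {g : ι → X → ℝ≥0∞} (hg : ∀ i, Measurable (g i)) :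
    ∫⁻ x, ∏ i, g i (x i) ∂Measure.pi μ = ∏ i, ∫⁻ x, g i x ∂μ i := by
  rw [lintegral_prod_eq_prod_lintegral_of_indepFun Finset.univ (fun i (x : ι → X) => g i (x i))
    (iIndepFun_pi fun i => (hg i).aemeasurable) fun i => (hg i).comp (measurable_pi_apply i)]
  exact Finset.prod_congr rfl fun i _ => (measurePreserving_eval μ i).lintegral_comp (hg i)

theorem pi_withDensity (μ : ι → Measure X) [∀ i, IsProbabilityMeasure (μ i)]
    {g : ι → X → ℝ≥0∞} (hg : ∀ i, Measurable (g i))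
    [∀ i, SigmaFinite ((μ i).withDensity (g i))] :
    Measure.pi (fun i => (μ i).withDensity (g i)) =
      (Measure.pi μ).withDensity fun x => ∏ i, g i (x i) := by
  refine pi_eq fun s hs => ?_
  have hS : MeasurableSet (Set.univ.pi s) := MeasurableSet.univ_pi hs
  rw [withDensity_apply _ hS, ← lintegral_indicator hS]
  have h : ∀ x : ι → X, (Set.univ.pi s).indicator (fun x => ∏ i, g i (x i)) x =
      ∏ i, (s i).indicator (g i) (x i) := by
    intro x
    by_cases hx : ∀ i, x i ∈ s i
    · rw [Set.indicator_of_mem (by simpa using hx)]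
      exact Finset.prod_congr rfl fun i _ => (Set.indicator_of_mem (hx i) _).symm
    · rw [Set.indicator_of_notMem (by simpa using hx)]
      push Not at hx
      obtain ⟨i, hi⟩ := hx
      exact (Finset.prod_eq_zero (Finset.mem_univ i) (Set.indicator_of_notMem hi _)).symm
  simp_rw [h]
  rw [lintegral_pi_prod μ fun i => (hg i).indicator (hs i)]
  exact Finset.prod_congr rfl fun i _ => by
    rw [lintegral_indicator (hs i), withDensity_apply _ (hs i)]

theorem pi_map_comp_perm (μ : ι → Measure X) [∀ i, SigmaFinite (μ i)] (σ : Equiv.Perm ι) :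
    (Measure.pi μ).map (fun x => x ∘ σ) = Measure.pi (fun i => μ (σ i)) := by
  refine (pi_eq fun s hs => ?_).symm
  rw [Measure.map_apply (by fun_prop) (MeasurableSet.univ_pi hs)]
  have h : (fun x : ι → X => x ∘ σ) ⁻¹' Set.univ.pi s =
      Set.univ.pi fun i => s (σ.symm i) := by
    ext x
    simp only [Set.mem_preimage, Set.mem_univ_pi, Function.comp_apply]
    exact ⟨fun hx i => by simpa using hx (σ.symm i), fun hx i => by simpa using hx (σ i)⟩
  rw [h, pi_pi, ← Equiv.prod_comp σ]
  simp

end MeasureTheory.Measure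

section ChiSq

variable {X : Type*} [MeasurableSpace X]

theorem isProbabilityMeasure_withDensity_of_lintegral_eq_one {P : Measure X} {f : X → ℝ≥0∞}
    (hf1 : ∫⁻ x, f x ∂P = 1) : IsProbabilityMeasure (P.withDensity f) :=
  ⟨by rw [withDensity_apply _ MeasurableSet.univ, Measure.restrict_univ, hf1]⟩

theorem lintegral_sq_eq_one_add_chiSqDiv_withDensity (P : Measure X) [IsProbabilityMeasure P]
    {f : X → ℝ≥0∞} (hf : Measurable f) (hf1 : ∫⁻ x, f x ∂P = 1) :
    ∫⁻ x, f x ^ 2 ∂P = 1 + chiSqDiv (P.withDensity f) P := by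
  rw [chiSqDiv, if_pos (withDensity_absolutelyContinuous _ _)]
  have hfin : ∀ᵐ x ∂P, f x < ∞ := ae_lt_top hf (by simp [hf1])
  have hae : ∀ᵐ x ∂P,
      ENNReal.ofReal ((((P.withDensity f).rnDeriv P x).toReal - 1) ^ 2) + 2 * f x =
        f x ^ 2 + 1 := by
    filter_upwards [Measure.rnDeriv_withDensity P hf, hfin] with x hx hx'
    rw [hx]
    obtain ⟨y, hy0, hy⟩ : ∃ y : ℝ, 0 ≤ y ∧ f x = ENNReal.ofReal y :=
      ⟨(f x).toReal, ENNReal.toReal_nonneg, (ENNReal.ofReal_toReal hx'.ne).symm⟩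
    rw [hy, ENNReal.toReal_ofReal hy0, ← ENNReal.ofReal_pow hy0,
      show (2 : ℝ≥0∞) = ENNReal.ofReal 2 by simp, ← ENNReal.ofReal_mul (by norm_num),
      ← ENNReal.ofReal_one, ← ENNReal.ofReal_add (by positivity) (by positivity),
      ← ENNReal.ofReal_add (by positivity) (by positivity)]
    congr 1
    ring
  have h := lintegral_congr_ae hae
  rw [lintegral_add_right _ (by fun_prop), lintegral_add_right _ (by fun_prop),
    lintegral_const_mul _ hf, hf1, lintegral_one, measure_univ, mul_one,
    show (2 : ℝ≥0∞) = 1 + 1 from one_add_one_eq_two.symm, ← add_assoc] at h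
  rw [add_comm (1 : ℝ≥0∞)]
  exact ((ENNReal.add_left_inj ENNReal.one_ne_top).1 h).symm

theorem chiSq_shuffleMix_withDensity_le (P : Measure X) [IsProbabilityMeasure P]
    {f : X → ℝ≥0∞} (hf : Measurable f) (hf1 : ∫⁻ x, f x ∂P = 1) (n m : ℕ) :
    1 + chiSqDiv (shuffleMix P (P.withDensity f) n m) (Measure.pi fun _ : Fin (n + m) => P) ≤
      (1 + ((m : ℝ≥0∞) / ((n : ℝ≥0∞) + (m : ℝ≥0∞))) * chiSqDiv (P.withDensity f) P) ^ m := by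
  set c := chiSqDiv (P.withDensity f) P with hc
  have hf2 := lintegral_sq_eq_one_add_chiSqDiv_withDensity P hf hf1
  set S : Finset (Fin (n + m)) := Finset.univ.filter fun i => n ≤ (i : ℕ) with hS
  have hScard : S.card = m := by
    have h := Finset.card_filter_add_card_filter_not (s := (Finset.univ : Finset (Fin (n + m))))
      (fun i => (i : ℕ) < n)
    simpa [hS, Fin.card_filter_val_lt] using h
  set g : Fin (n + m) → X → ℝ≥0∞ := fun i => if i ∈ S then f else 1 with hg
  have hgm : ∀ i, Measurable (g i) := by
    intro i
    simp only [hg]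
    split_ifs
    exacts [hf, measurable_const]
  have hg1 : ∀ i, ∫⁻ x, g i x ∂P = 1 := by
    intro i
    simp only [hg]
    split_ifs
    exacts [hf1, by simp]
  have hprob : ∀ i, IsProbabilityMeasure (P.withDensity (g i)) := fun i =>
    isProbabilityMeasure_withDensity_of_lintegral_eq_one (hg1 i)
  have hfac0 : ((n + m).factorial : ℝ≥0∞) ≠ 0 := by exact_mod_cast (n + m).factorial_ne_zero
  have hfacT : ((n + m).factorial : ℝ≥0∞) ≠ ∞ := ENNReal.natCast_ne_top _
  set F : Equiv.Perm (Fin (n + m)) → (Fin (n + m) → X) → ℝ≥0∞ :=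
    fun σ x => ∏ i, g (σ i) (x i) with hF
  have hFm : ∀ σ, Measurable (F σ) := fun σ =>
    Finset.measurable_prod _ fun i _ => (hgm (σ i)).comp (measurable_pi_apply i)
  have hFsum : Measurable fun x => ∑ σ, F σ x := Finset.measurable_sum _ fun σ _ => hFm σ
  have hF1 : ∀ σ, ∫⁻ x, F σ x ∂(Measure.pi fun _ : Fin (n + m) => P) = 1 := by
    intro σ
    rw [Measure.lintegral_pi_prod _ fun i => hgm (σ i)]
    exact Finset.prod_eq_one fun i _ => hg1 _
  have hmix : shuffleMix P (P.withDensity f) n m =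
      (Measure.pi fun _ : Fin (n + m) => P).withDensity
        (fun x => ((n + m).factorial : ℝ≥0∞)⁻¹ * ∑ σ, F σ x) := by
    have hμ : (fun i : Fin (n + m) => if (i : ℕ) < n then P else P.withDensity f) =
        fun i => P.withDensity (g i) := by
      funext i
      by_cases hi : (i : ℕ) < n
      · simp [hg, hS, hi, not_le.2 hi]
      · simp [hg, hS, hi, not_lt.1 hi]
    refine Eq.trans ?_ (withDensity_smul ((n + m).factorial : ℝ≥0∞)⁻¹ hFsum).symm
    rw [shuffleMix, hμ, Measure.withDensity_finsetSum _ _ hFm]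
    congr 1
    refine Finset.sum_congr rfl fun σ _ => ?_
    rw [Measure.pi_map_comp_perm, Measure.pi_withDensity _ fun i => hgm (σ i)]
  have hg2 : ∀ i j, ∫⁻ x, g i x * g j x ∂P =
      if i ∈ S then (1 + if j ∈ S then c else 0) else 1 := by
    intro i j
    by_cases hi : i ∈ S <;> by_cases hj : j ∈ S <;> simp [hg, hi, hj, hf1, hc, ← sq, hf2]
  have hint : ∫⁻ x, ((n + m).factorial : ℝ≥0∞)⁻¹ * ∑ σ, F σ x
      ∂(Measure.pi fun _ : Fin (n + m) => P) = 1 := by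
    rw [lintegral_const_mul _ hFsum, lintegral_finsetSum _ fun σ _ => hFm σ]
    simp [hF1, Fintype.card_perm, ENNReal.inv_mul_cancel hfac0 hfacT]
  have hcross : ∀ σ, ∑ τ, ∫⁻ x, F σ x * F τ x ∂(Measure.pi fun _ : Fin (n + m) => P) ≤
      (n + m).factorial * (1 + ((m : ℝ≥0∞) / ((n : ℝ≥0∞) + (m : ℝ≥0∞))) * c) ^ m := by
    intro σ
    have hcard : (S.map σ.symm.toEmbedding).card = m := by rw [Finset.card_map, hScard]
    have h := Equiv.Perm.sum_prod_ite_le (S.map σ.symm.toEmbedding) S c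
    rw [hcard, hScard, Fintype.card_fin] at h
    push_cast at h
    refine le_of_eq_of_le (Finset.sum_congr rfl fun τ _ => ?_) h
    simp_rw [hF, ← Finset.prod_mul_distrib]
    rw [Measure.lintegral_pi_prod (fun _ => P) (g := fun i x => g (σ i) x * g (τ i) x)
      fun i => (hgm (σ i)).mul (hgm (τ i))]
    simp_rw [hg2]
    rw [← Finset.prod_filter]
    refine Finset.prod_congr ?_ fun _ _ => rfl
    ext i
    simp
  rw [hmix, ← lintegral_sq_eq_one_add_chiSqDiv_withDensity _ (hFsum.const_mul _) hint]
  simp_rw [mul_pow, sq (∑ σ, F σ _), Finset.sum_mul_sum]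
  rw [lintegral_const_mul _ (by fun_prop), lintegral_finsetSum _ fun σ _ => by fun_prop]
  have hsum : ∑ σ, ∫⁻ x, ∑ τ, F σ x * F τ x ∂(Measure.pi fun _ : Fin (n + m) => P) ≤
      ((n + m).factorial : ℝ≥0∞) ^ 2 *
        (1 + ((m : ℝ≥0∞) / ((n : ℝ≥0∞) + (m : ℝ≥0∞))) * c) ^ m := by
    refine (Finset.sum_le_card_nsmul _ _ ((n + m).factorial *
      (1 + ((m : ℝ≥0∞) / ((n : ℝ≥0∞) + (m : ℝ≥0∞))) * c) ^ m) fun σ _ => ?_).trans_eq ?_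
    · rw [lintegral_finsetSum _ fun τ _ => by fun_prop]
      exact hcross σ
    · rw [Finset.card_univ, Fintype.card_perm, Fintype.card_fin, nsmul_eq_mul]
      ring
  refine (mul_le_mul_right hsum _).trans_eq ?_
  rw [← mul_assoc, ← mul_pow, ENNReal.inv_mul_cancel hfac0 hfacT, one_pow, one_mul]

end ChiSq

/-- Key lemma for the shuffling approach.
If `Z = (Z_1, …, Z_{n+m})` is a uniformly random shuffle of `n` i.i.d. samples from
`P` and `m` i.i.d. samples from `Q` (independent of each other), then
`χ²(P_mix ‖ P^{⊗(n+m)}) ≤ (1 + (m/(n+m))·χ²(Q‖P))^m − 1`. -/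
theorem chiSq_shuffleMix_le
    {X : Type*} [MeasurableSpace X] (P Q : Measure X)
    (hP : IsProbabilityMeasure P) (hQ : IsProbabilityMeasure Q)
    (n m : ℕ) (hn : 1 ≤ n) :
    chiSqDiv (shuffleMix P Q n m) (Measure.pi fun _ : Fin (n + m) => P) ≤
      (1 + ((m : ℝ≥0∞) / ((n : ℝ≥0∞) + (m : ℝ≥0∞))) * chiSqDiv Q P) ^ m - 1 := by
  refine ENNReal.le_sub_of_add_le_left ENNReal.one_ne_top ?_
  by_cases hQP : Q ≪ P
  · have hf := Measure.withDensity_rnDeriv_eq Q P hQP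
    have hf1 : ∫⁻ x, Q.rnDeriv P x ∂P = 1 := by
      rw [Measure.lintegral_rnDeriv hQP, measure_univ]
    have h := chiSq_shuffleMix_withDensity_le P (Measure.measurable_rnDeriv Q P) hf1 n m
    rwa [hf] at h
  · rcases Nat.eq_zero_or_pos m with rfl | hm
    · have h := chiSq_shuffleMix_withDensity_le P (measurable_const (a := 1)) (by simp) n 0
      have heq : shuffleMix P (P.withDensity fun _ => 1) n 0 = shuffleMix P Q n 0 := by
        simp [shuffleMix]
      rw [heq] at h
      simpa using h
    · have htop : (m : ℝ≥0∞) / ((n : ℝ≥0∞) + (m : ℝ≥0∞)) ≠ 0 := by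
        refine (ENNReal.div_pos ?_ (by finiteness)).ne'
        exact_mod_cast hm.ne'
      rw [show chiSqDiv Q P = ⊤ from if_neg hQP, ENNReal.mul_top htop, add_top,
        ENNReal.top_pow hm.ne']
      exact le_top
end
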